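/- Let V ∈ C(𝕋^d, ℂ) be Hölder continuous, let m ∈ ℕ and a_{±1}, …, a_{±m} ∈ ℂ, and for α, θ ∈ 𝕋^d let T(α, θ) be the bounded operator on ℓ²(ℤ) whose matrix (t_{ij})_{i,j∈ℤ} satisfies t_{j,j} = V(θ₁ + jα₁, …, θ_d + jα_d), t_{j, j±k} = a_{±k} for 1 ≤ k ≤ m, and t_{j, j±k} = 0 for k > m. Define 𝒮(T(α)) = ⋃_{θ∈𝕋^d} σ(T(α, θ)). If α^{(n)} → α in 𝕋^d and z ∈ 𝒮(T(α^{(n)})) for every n, then z ∈ 𝒮(T(α)). -/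

import Mathlib

open MeasureTheory Complex Filter

noncomputable section

abbrev ℓ2 (ι : Type*) := lp (fun _ : ι => ℂ) 2

lemma h1 (u : ℓ2 ℤ) : HasSum (fun j => ‖u j‖^2) (‖u‖^2) := by
  have := lp.hasSum_norm (p := 2) (by norm_num) u
  simpa using this

lemma h2 (g : ℤ → ℂ) (hg : Summable (fun j => ‖g j‖^2)) : ∃ v : ℓ2 ℤ, ∀ j, v j = g j := by
  have : Memℓp g 2 := by
    rw [memℓp_gen_iff (by norm_num)]
    simpa using hg
  exact ⟨⟨g, this⟩, fun j => rfl⟩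

lemma h3 (v u : ℓ2 ℤ) (k : ℤ) (M : ℝ) (hM : 0 ≤ M) (h : ∀ j, ‖v j‖ ≤ M * ‖u (j + k)‖) :
    ‖v‖ ≤ M * ‖u‖ := by
  have a := h1 v
  have b := ((Equiv.addRight k).hasSum_iff.2 (h1 u)).mul_left (M^2)
  have := hasSum_le (fun j => ?_) a b
  · rw [← mul_pow] at this
    exact le_of_sq_le_sq this (by positivity) 
  · simp only [Function.comp, Equiv.coe_addRight, ← mul_pow]
    exact pow_le_pow_left₀ (norm_nonneg _) (h j) 2

lemma h4 (g : ℤ → ℂ) (u : ℓ2 ℤ) (k : ℤ) (M : ℝ) (hM : 0 ≤ M) (h : ∀ j, ‖g j‖ ≤ M * ‖u (j + k)‖) :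
    ∃ v : ℓ2 ℤ, (∀ j, v j = g j) ∧ ‖v‖ ≤ M * ‖u‖ := by
  have b := ((Equiv.addRight k).hasSum_iff.2 (h1 u)).mul_left (M^2)
  obtain ⟨v, hv⟩ := h2 g (by
    refine Summable.of_nonneg_of_le (fun j => by positivity) (fun j => ?_) b.summable
    simp only [Function.comp, Equiv.coe_addRight, ← mul_pow]
    exact pow_le_pow_left₀ (norm_nonneg _) (h j) 2)
  exact ⟨v, hv, h3 v u k M hM (fun j => by rw [hv]; exact h j)⟩

/-- convolution -/
lemma h5 (w f : ℤ → ℝ) (hw : ∀ r, 0 ≤ w r) (hf : ∀ r, 0 ≤ f r) {W F : ℝ} (hW : HasSum w W)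
    (hF : HasSum f F) : HasSum (fun s => ∑' j, w (j - s) * f j) (W * F) := by
  have h := hW.mul hF (hW.summable.mul_of_nonneg hF.summable hw hf)
  let e : ℤ × ℤ ≃ ℤ × ℤ := 
    { toFun := fun p => (p.2 - p.1, p.2), invFun := fun p => (p.2 - p.1, p.2)
      left_inv := fun p => by simp
      right_inv := fun p => by simp }
  have h' := e.hasSum_iff.2 h
  refine h'.prod_fiberwise (f := fun p : ℤ × ℤ => w (p.2 - p.1) * f p.2) (fun s => ?_) 
  exact (h'.summable.prod_factor s).hasSum

lemma h6 (A : ℓ2 ℤ →L[ℂ] ℓ2 ℤ) (c : ℝ) (hc : 0 < c) (h : ∀ u, c * ‖u‖ ≤ ‖A u‖)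
    (h' : ∀ u, c * ‖u‖ ≤ ‖ContinuousLinearMap.adjoint A u‖) : IsUnit A := by
  have anti : AntilipschitzWith (Real.toNNReal c⁻¹) A := by
    refine ContinuousLinearMap.antilipschitz_of_bound A (fun u => ?_)
    rw [Real.coe_toNNReal _ (by positivity)]
    rw [inv_mul_eq_div, le_div_iff₀ hc, mul_comm]; exact h u
  rw [ContinuousLinearMap.isUnit_iff_bijective]
  refine ⟨anti.injective, ?_⟩
  have hcl := anti.isClosed_range A.uniformContinuous
  have ho : A.rangeᗮ = ⊥ := by
    rw [ContinuousLinearMap.orthogonal_range, LinearMap.ker_eq_bot']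
    intro u hu
    have := h' u
    have hu' : ContinuousLinearMap.adjoint A u = 0 := hu
    rw [hu', norm_zero] at this
    have : ‖u‖ ≤ 0 := by nlinarith
    simpa using this
  have hd := (Submodule.topologicalClosure_eq_top_iff (K := A.range)).2 ho
  have hc2 : IsClosed (A.range : Set (ℓ2 ℤ)) := by rw [LinearMap.coe_range]; exact hcl
  rw [IsClosed.submodule_topologicalClosure_eq hc2] at hd
  exact LinearMap.range_eq_top.1 hd

lemma h7 {d : ℕ} 
    (V : (Fin d → AddCircle (1 : ℝ)) → ℂ) 
    (m : ℕ) (a : ℤ → ℂ)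
    (α θ : Fin d → AddCircle (1 : ℝ))
    (T : (ℓ2 ℤ →L[ℂ] ℓ2 ℤ))
    (hT : ∀ (u : ℓ2 ℤ) (j : ℤ),
      T u j = V (θ + j • α) * u j
        + ∑ k ∈ Finset.Icc (1 : ℤ) (m : ℤ), (a k * u (j + k) + a (-k) * u (j - k))) 
    (u : ℓ2 ℤ) (j : ℤ) : 
    ContinuousLinearMap.adjoint T u j = star (V (θ + j • α)) * u j
        + ∑ k ∈ Finset.Icc (1 : ℤ) (m : ℤ), (star (a (-k)) * u (j + k) + star (a (- -k)) * u (j - k)) := by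
  have e1 : ∀ i : ℤ, ∀ w : ℓ2 ℤ, inner ℂ (lp.single 2 i (1:ℂ) : ℓ2 ℤ) w = w i := by
    intro i w
    rw [lp.inner_single_left]; simp
  have e2 : T (lp.single 2 j (1:ℂ)) = V (θ + j • α) • (lp.single 2 j (1:ℂ) : ℓ2 ℤ) +
     ∑ k ∈ Finset.Icc (1 : ℤ) (m : ℤ), (a k • (lp.single 2 (j-k) (1:ℂ) : ℓ2 ℤ) + 
       a (-k) • (lp.single 2 (j+k) (1:ℂ) : ℓ2 ℤ)) := by
    ext i
    rw [hT]
    rw [lp.coeFn_add, Pi.add_apply, lp.coeFn_sum, Finset.sum_apply]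
    simp only [lp.coeFn_add, lp.coeFn_smul, Pi.add_apply, Pi.smul_apply, lp.single_apply, smul_eq_mul, Pi.single_apply]
    congr 1
    · by_cases hij : i = j
      · subst hij; simp
      · simp [hij]
    · refine Finset.sum_congr rfl (fun k _ => ?_)
      have q1 : i + k = j ↔ i = j - k := by omega
      have q2 : i - k = j ↔ i = j + k := by omega
      simp only [q1, q2]
  rw [← e1 j, ContinuousLinearMap.adjoint_inner_right, e2, inner_add_left, sum_inner]
  simp only [inner_add_left, inner_smul_left, e1, neg_neg]
  congr 1
  exact Finset.sum_congr rfl (fun k _ => add_comm _ _)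

lemma h8 {d : ℕ} (V : (Fin d → AddCircle (1 : ℝ)) → ℂ) (hVcont : Continuous V)
    (m : ℕ) (a : ℤ → ℂ)
    (α : Fin d → AddCircle (1 : ℝ))
    (T : (Fin d → AddCircle (1 : ℝ)) → (ℓ2 ℤ →L[ℂ] ℓ2 ℤ))
    (hT : ∀ (θ : Fin d → AddCircle (1 : ℝ)) (u : ℓ2 ℤ) (j : ℤ),
      T θ u j = V (θ + j • α) * u j
        + ∑ k ∈ Finset.Icc (1 : ℤ) (m : ℤ), (a k * u (j + k) + a (-k) * u (j - k))) :
    Continuous T := by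
  have hu := CompactSpace.uniformContinuous_of_continuous hVcont
  rw [Metric.uniformContinuous_iff] at hu
  rw [Metric.continuous_iff]
  intro θ0 ε hε
  obtain ⟨δ, hδ, h⟩ := hu (ε / 2) (by positivity)
  refine ⟨δ, hδ, fun θ hθ => ?_⟩
  rw [dist_eq_norm]
  refine lt_of_le_of_lt (ContinuousLinearMap.opNorm_le_bound _ (by positivity : 0 ≤ ε / 2) 
    (fun u => ?_)) (half_lt_self hε)
  refine h3 _ u 0 _ (by positivity) (fun j => ?_)
  rw [sub_apply, lp.coeFn_sub, Pi.sub_apply, hT, hT, add_sub_add_right_eq_sub,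
    ← sub_mul, norm_mul, add_zero]
  refine mul_le_mul_of_nonneg_right ?_ (norm_nonneg _)
  rw [← dist_eq_norm]
  exact (h (by rwa [dist_add_right])).le

lemma h9 {d : ℕ} (V : (Fin d → AddCircle (1 : ℝ)) → ℂ) (hVcont : Continuous V)
    (α : Fin d → AddCircle (1 : ℝ)) (w : ℤ → ℝ) (hw : ∀ r, 0 ≤ w r) (hws : Summable w) :
    ∃ D : (Fin d → AddCircle (1 : ℝ)) → ℤ → ℝ, 
      (∀ β r θ, ‖V (θ + r • β) - V (θ + r • α)‖ ≤ D β r) ∧ (∀ β r, 0 ≤ D β r) ∧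
      (∀ β, Summable (fun r => w r * D β r ^ 2)) ∧
      Tendsto (fun β => ∑' r, w r * D β r ^ 2) (nhds α) (nhds 0) := by
  obtain ⟨B, hB⟩ : ∃ B, ∀ θ, ‖V θ‖ ≤ B := by
    obtain ⟨B, hB⟩ := isCompact_univ.exists_bound_of_continuousOn (f := V) hVcont.continuousOn
    exact ⟨B, fun θ => hB θ trivial⟩
  have hb : ∀ β (r : ℤ) θ, ‖V (θ + r • β) - V (θ + r • α)‖ ≤ 2 * B := fun β r θ => by
    refine (norm_sub_le _ _).trans ?_
    linarith [hB (θ + r • β), hB (θ + r • α)]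
  let D : (Fin d → AddCircle (1 : ℝ)) → ℤ → ℝ := fun β r => ⨆ θ, ‖V (θ + r • β) - V (θ + r • α)‖
  have hD1 : ∀ β r θ, ‖V (θ + r • β) - V (θ + r • α)‖ ≤ D β r := fun β r θ =>
    le_ciSup (f := fun θ => ‖V (θ + r • β) - V (θ + r • α)‖) 
      ⟨2 * B, by rintro _ ⟨θ, rfl⟩; exact hb β r θ⟩ θ
  have hD0 : ∀ β r, 0 ≤ D β r := fun β r => (norm_nonneg _).trans (hD1 β r 0)
  have hD2 : ∀ β r, D β r ≤ 2 * B := fun β r => ciSup_le (hb β r)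
  have hD3 : ∀ β r, w r * D β r ^ 2 ≤ w r * (2 * B) ^ 2 := fun β r =>
    mul_le_mul_of_nonneg_left (pow_le_pow_left₀ (hD0 β r) (hD2 β r) 2) (hw r)
  have hs : Summable (fun r => w r * (2 * B) ^ 2) := hws.mul_right _
  have hD4 : ∀ r, Tendsto (fun β => D β r) (nhds α) (nhds 0) := by
    intro r
    have hu := CompactSpace.uniformContinuous_of_continuous hVcont
    rw [Metric.uniformContinuous_iff] at hu
    rw [Metric.tendsto_nhds]
    intro ε hε
    obtain ⟨δ, hδ, h⟩ := hu (ε / 2) (by positivity)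
    have hc : Continuous (fun β : Fin d → AddCircle (1 : ℝ) => r • β) := continuous_zsmul r
    filter_upwards [Metric.tendsto_nhds.1 (hc.tendsto α) δ hδ] with β hβ
    rw [Real.dist_eq, sub_zero, abs_of_nonneg (hD0 β r)]
    refine lt_of_le_of_lt (ciSup_le (fun θ => ?_)) (half_lt_self hε)
    rw [← dist_eq_norm]
    exact (h (by rwa [dist_add_left])).le
  refine ⟨D, hD1, hD0, fun β => Summable.of_nonneg_of_le (fun r => mul_nonneg (hw r) (sq_nonneg _)) (hD3 β) hs, ?_⟩
  have := tendsto_tsum_of_dominated_convergence (f := fun β r => w r * D β r ^ 2) (g := fun _ => (0:ℝ)) (𝓕 := nhds α) hs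
    (fun r => by simpa using ((hD4 r).pow 2).const_mul (w r)) 
    (Eventually.of_forall fun β r => by
      rw [Real.norm_of_nonneg (mul_nonneg (hw r) (sq_nonneg _))]; exact hD3 β r)
  simpa using this

lemma h10 (ε : ℝ) (hε : 0 < ε) : Summable (fun r : ℤ => Real.exp (-(ε * |(r:ℝ)|)) ^ 2) := by
  have h : Summable (fun n : ℕ => Real.exp (-(ε * |(n:ℝ)|)) ^ 2) := by
    have := summable_geometric_of_lt_one (Real.exp_nonneg (-(2*ε))) (by rw [Real.exp_lt_one_iff]; linarith)
    refine this.congr (fun n => ?_)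
    rw [← Real.exp_nat_mul, ← Real.exp_nat_mul, abs_of_nonneg (Nat.cast_nonneg n)]
    congr 1; push_cast; ring
  refine Summable.of_nat_of_neg ?_ ?_
  · simpa using h
  · simpa using h

lemma h11 (ε : ℝ) (hε : 0 < ε) (m : ℕ) (x k : ℤ) (hk : |k| ≤ m) :
    |Real.exp (-(ε * |((x + k : ℤ):ℝ)|)) - Real.exp (-(ε * |(x:ℝ)|))| ≤
      (Real.exp (ε * m) - 1) * Real.exp (-(ε * |((x + k : ℤ):ℝ)|)) := by
  have hk' : |(k:ℝ)| ≤ m := by exact_mod_cast hk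
  push_cast
  set p := Real.exp (-(ε * |(x + k : ℝ)|))
  have t1 : |(x + k : ℝ)| ≤ |(x:ℝ)| + m := (abs_add_le _ _).trans (by linarith)
  have t2 : |(x : ℝ)| ≤ |(x + k:ℝ)| + m := by
    have := abs_sub (x + k : ℝ) k
    rw [add_sub_cancel_right] at this; linarith
  have hp : 0 < p := Real.exp_pos _
  have e1 : Real.exp (-(ε * |(x:ℝ)|)) ≤ Real.exp (ε * m) * p := by
    rw [← Real.exp_add]; exact Real.exp_le_exp.2 (by nlinarith)
  have e2 : Real.exp (-(ε * m)) * p ≤ Real.exp (-(ε * |(x:ℝ)|)) := by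
    rw [← Real.exp_add]; exact Real.exp_le_exp.2 (by nlinarith)
  have e3 : 2 ≤ Real.exp (-(ε * m)) + Real.exp (ε * m) := by
    linarith [Real.add_one_le_exp (ε * m), Real.add_one_le_exp (-(ε * m))]
  rw [abs_le]
  constructor
  · linarith
  · nlinarith

lemma h12 (c C : ℝ) (hc : 0 < c) (m : ℕ) : ∃ ε > 0, (Real.exp (ε * m) - 1) * C ≤ c := by
  have : Tendsto (fun ε : ℝ => (Real.exp (ε * m) - 1) * C) (nhdsWithin 0 (Set.Ioi 0)) (nhds 0) := by
    have h : Continuous (fun ε : ℝ => (Real.exp (ε * m) - 1) * C) := by fun_prop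
    have := h.tendsto 0
    simp only [zero_mul, Real.exp_zero, sub_self] at this
    exact this.mono_left nhdsWithin_le_nhds
  obtain ⟨ε, h1, h2⟩ := ((this.eventually (gt_mem_nhds hc)).and self_mem_nhdsWithin).exists
  exact ⟨ε, h2, h1.le⟩

/-- single centre estimate -/
lemma h13 {d : ℕ} (V : (Fin d → AddCircle (1 : ℝ)) → ℂ)
    (m : ℕ) (a : ℤ → ℂ)
    (T : (Fin d → AddCircle (1 : ℝ)) → (Fin d → AddCircle (1 : ℝ)) → (ℓ2 ℤ →L[ℂ] ℓ2 ℤ))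
    (hT : ∀ (α θ : Fin d → AddCircle (1 : ℝ)) (u : ℓ2 ℤ) (j : ℤ),
      T α θ u j = V (θ + j • α) * u j
        + ∑ k ∈ Finset.Icc (1 : ℤ) (m : ℤ), (a k * u (j + k) + a (-k) * u (j - k)))
    (α : Fin d → AddCircle (1 : ℝ)) (z : ℂ) (c : ℝ) (hc : 0 < c)
    (hlow : ∀ θ u, c * ‖u‖ ≤ ‖T α θ u - z • u‖)
    (φ : ℤ → ℝ) (hφ0 : ∀ r, 0 ≤ φ r) (hφ1 : ∀ r, φ r ≤ 1) (δ : ℝ) (hδ : 0 ≤ δ)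
    (hφ : ∀ x k : ℤ, |k| ≤ m → |φ (x + k) - φ x| ≤ δ * φ (x + k))
    (hδc : δ * (∑ k ∈ Finset.Icc (1 : ℤ) (m : ℤ), (‖a k‖ + ‖a (-k)‖)) ≤ c / 2)
    (β θ : Fin d → AddCircle (1 : ℝ)) (D : ℤ → ℝ) 
    (hD : ∀ r θ, ‖V (θ + r • β) - V (θ + r • α)‖ ≤ D r) 
    (u : ℓ2 ℤ) (s : ℤ)
    (hDs : Summable (fun j => φ (j - s) ^ 2 * D (j - s) ^ 2 * ‖u j‖ ^ 2)) : 
    c ^ 2 / 4 * ∑' j, φ (j - s) ^ 2 * ‖u j‖ ^ 2 ≤ 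
      2 * ∑' j, φ (j - s) ^ 2 * ‖(T β θ u - z • u) j‖ ^ 2 + 
      2 * ∑' j, φ (j - s) ^ 2 * D (j - s) ^ 2 * ‖u j‖ ^ 2 := by
  have key : ∀ x : ℓ2 ℤ, ∃ v : ℓ2 ℤ, ∀ j, v j = (φ (j - s) : ℂ) * x j := by
    intro x
    obtain ⟨v, hv, -⟩ := h4 (fun j => (φ (j - s) : ℂ) * x j) x 0 1 zero_le_one (fun j => by
      rw [norm_mul, Complex.norm_real, Real.norm_of_nonneg (hφ0 _), add_zero]
      exact mul_le_mul_of_nonneg_right (hφ1 _) (norm_nonneg _))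
    exact ⟨v, hv⟩
  have keyn : ∀ x v : ℓ2 ℤ, (∀ j, v j = (φ (j - s) : ℂ) * x j) → 
      ∑' j, φ (j - s) ^ 2 * ‖x j‖ ^ 2 = ‖v‖ ^ 2 := by
    intro x v hv
    rw [← (h1 v).tsum_eq]
    refine tsum_congr (fun j => ?_)
    rw [hv, norm_mul, Complex.norm_real, Real.norm_of_nonneg (hφ0 _), mul_pow]
  obtain ⟨v, hv⟩ := key u
  obtain ⟨G, hG⟩ := key (T β θ u - z • u)
  rw [keyn u v hv, keyn _ G hG]
  set θ' := θ + s • β - s • α with hθ'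
  have hE0 : ∀ j, ‖(V (θ' + j • α) - V (θ + j • β)) * ((φ (j - s) : ℂ) * u j)‖ ^ 2 ≤ 
      φ (j - s) ^ 2 * D (j - s) ^ 2 * ‖u j‖ ^ 2 := by
    intro j
    have q1 : θ' + j • α = (θ + s • β) + (j - s) • α := by rw [hθ', sub_smul]; abel
    have q2 : θ + j • β = (θ + s • β) + (j - s) • β := by rw [sub_smul]; abel
    rw [q1, q2, norm_mul, norm_mul, Complex.norm_real, Real.norm_of_nonneg (hφ0 _), norm_sub_rev]
    have := pow_le_pow_left₀ (norm_nonneg _) (hD (j - s) (θ + s • β)) 2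
    calc _ = ‖V (θ + s • β + (j - s) • β) - V (θ + s • β + (j - s) • α)‖ ^ 2 * (φ (j - s) ^ 2 * ‖u j‖ ^ 2) := by ring
      _ ≤ D (j - s) ^ 2 * (φ (j - s) ^ 2 * ‖u j‖ ^ 2) := mul_le_mul_of_nonneg_right this (by positivity)
      _ = _ := by ring
  obtain ⟨E, hE⟩ := h2 (fun j => (V (θ' + j • α) - V (θ + j • β)) * ((φ (j - s) : ℂ) * u j))
    (Summable.of_nonneg_of_le (fun j => by positivity) hE0 hDs)
  have hEn : ‖E‖ ^ 2 ≤ ∑' j, φ (j - s) ^ 2 * D (j - s) ^ 2 * ‖u j‖ ^ 2 := by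
    refine hasSum_le (fun j => ?_) (h1 E) hDs.hasSum
    rw [hE]; exact hE0 j
  have hP : ∀ k : ℤ, ∃ P : ℓ2 ℤ, |k| ≤ m → 
      ((∀ j, P j = a k * (((φ (j + k - s) : ℂ) - (φ (j - s) : ℂ)) * u (j + k))) ∧
        ‖P‖ ≤ (δ * ‖a k‖) * ‖v‖) := by
    intro k
    by_cases hk : |k| ≤ m
    · obtain ⟨P, h, h'⟩ := h4 (fun j => a k * (((φ (j + k - s) : ℂ) - (φ (j - s) : ℂ)) * u (j + k))) v k
        (δ * ‖a k‖) (by positivity) (fun j => by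
          have := hφ (j - s) k hk
          rw [sub_add_eq_add_sub] at this
          rw [hv, norm_mul, norm_mul, norm_mul, ← Complex.ofReal_sub, Complex.norm_real, 
            Complex.norm_real, Real.norm_eq_abs, Real.norm_of_nonneg (hφ0 _)]
          calc _ ≤ ‖a k‖ * ((δ * φ (j + k - s)) * ‖u (j + k)‖) := by gcongr
            _ = _ := by ring)
      exact ⟨P, fun _ => ⟨h, h'⟩⟩
    · exact ⟨0, fun h => absurd h hk⟩
  choose P hP using hP
  have hk1 : ∀ k ∈ Finset.Icc (1 : ℤ) (m : ℤ), |k| ≤ m := fun k hk => by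
    rw [Finset.mem_Icc] at hk; rw [abs_of_nonneg (by omega)]; exact hk.2
  have hk2 : ∀ k ∈ Finset.Icc (1 : ℤ) (m : ℤ), |-k| ≤ m := fun k hk => by
    rw [abs_neg]; exact hk1 k hk
  have hsum : T α θ' v - z • v = G + E + ∑ k ∈ Finset.Icc (1 : ℤ) (m : ℤ), (P k + P (-k)) := by
    ext j
    simp only [lp.coeFn_add, lp.coeFn_sub, lp.coeFn_smul, lp.coeFn_sum, Pi.add_apply, Pi.sub_apply, 
      Pi.smul_apply, Finset.sum_apply, smul_eq_mul, hT, hG, hE, hv]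
    have : ∑ k ∈ Finset.Icc (1 : ℤ) (m : ℤ), (P k j + P (-k) j) = 
       ∑ k ∈ Finset.Icc (1 : ℤ) (m : ℤ), (a k * ((φ (j + k - s) : ℂ) * u (j + k)) + a (-k) * ((φ (j - k - s) : ℂ) * u (j - k)))
       - (φ (j - s) : ℂ) * ∑ k ∈ Finset.Icc (1 : ℤ) (m : ℤ), (a k * u (j + k) + a (-k) * u (j - k)) := by
      rw [Finset.mul_sum, ← Finset.sum_sub_distrib]
      refine Finset.sum_congr rfl (fun k hk => ?_)
      rw [(hP k (hk1 k hk)).1, (hP (-k) (hk2 k hk)).1, ← sub_eq_add_neg]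
      ring
    rw [this]
    ring
  have hPn : ‖∑ k ∈ Finset.Icc (1 : ℤ) (m : ℤ), (P k + P (-k))‖ ≤ c / 2 * ‖v‖ := by
    refine le_trans ?_ (mul_le_mul_of_nonneg_right hδc (norm_nonneg v))
    rw [Finset.mul_sum, Finset.sum_mul]
    refine norm_sum_le_of_le _ (fun k hk => ?_)
    refine (norm_add_le _ _).trans ?_
    linarith [(hP k (hk1 k hk)).2, (hP (-k) (hk2 k hk)).2]
  have h := hlow θ' v
  rw [hsum] at h
  have t1 := norm_add_le (G + E) (∑ k ∈ Finset.Icc (1 : ℤ) (m : ℤ), (P k + P (-k)))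
  have t2 := norm_add_le G E
  have h' : c / 2 * ‖v‖ ≤ ‖G‖ + ‖E‖ := by linarith
  have h'' := pow_le_pow_left₀ (by positivity) h' 2
  nlinarith [sq_nonneg (‖G‖ - ‖E‖)]

lemma h14 {d : ℕ} (V : (Fin d → AddCircle (1 : ℝ)) → ℂ) (hVcont : Continuous V)
    (m : ℕ) (a : ℤ → ℂ)
    (T : (Fin d → AddCircle (1 : ℝ)) → (Fin d → AddCircle (1 : ℝ)) → (ℓ2 ℤ →L[ℂ] ℓ2 ℤ))
    (hT : ∀ (α θ : Fin d → AddCircle (1 : ℝ)) (u : ℓ2 ℤ) (j : ℤ),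
      T α θ u j = V (θ + j • α) * u j
        + ∑ k ∈ Finset.Icc (1 : ℤ) (m : ℤ), (a k * u (j + k) + a (-k) * u (j - k)))
    (α : Fin d → AddCircle (1 : ℝ)) (z : ℂ) (c : ℝ) (hc : 0 < c)
    (hlow : ∀ θ u, c * ‖u‖ ≤ ‖T α θ u - z • u‖) :
    ∀ᶠ β in nhds α, ∀ θ u, c / 4 * ‖u‖ ≤ ‖T β θ u - z • u‖ := by
  obtain ⟨ε, hε, hεc⟩ := h12 (c / 2) (∑ k ∈ Finset.Icc (1 : ℤ) (m : ℤ), (‖a k‖ + ‖a (-k)‖)) 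
    (by positivity) m
  set φ : ℤ → ℝ := fun r => Real.exp (-(ε * |(r:ℝ)|)) with hφ
  have hφ0 : ∀ r, 0 < φ r := fun r => Real.exp_pos _
  have hs : Summable (fun r => φ r ^ 2) := h10 ε hε
  obtain ⟨D, hD1, hD0, hD2, hD3⟩ := h9 V hVcont α (fun r => φ r ^ 2) (fun r => by positivity) hs
  set K := ∑' r, φ r ^ 2 with hK
  have hKpos : 0 < K := hs.tsum_pos (fun r => by positivity) 0 (pow_pos (hφ0 0) 2)
  filter_upwards [hD3.eventually (gt_mem_nhds (show 0 < c ^ 2 * K / 16 by positivity))] with β hβ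
  intro θ u
  set η := ∑' r, φ r ^ 2 * D β r ^ 2 with hη
  have hw0 : ∀ r, 0 ≤ φ r ^ 2 * D β r ^ 2 := fun r => by positivity
  have c1 := (h5 _ _ (fun r => by positivity) (fun r => by positivity) hs.hasSum (h1 u)).mul_left (c ^ 2 / 4)
  have c2 := (h5 _ _ (fun r => by positivity) (fun r => by positivity) hs.hasSum 
    (h1 (T β θ u - z • u))).mul_left 2
  have c3 := (h5 _ _ hw0 (fun r => by positivity) (hD2 β).hasSum (h1 u)).mul_left 2
  have hle := hasSum_le (fun s => ?_) c1 (c2.add c3)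
  · have : c ^ 2 / 16 * ‖u‖ ^ 2 ≤ ‖T β θ u - z • u‖ ^ 2 := by
      have hu2 : 0 ≤ ‖u‖ ^ 2 := by positivity
      have := mul_le_mul_of_nonneg_right hβ.le hu2
      refine le_of_mul_le_mul_left ?_ hKpos
      change c ^ 2 / 4 * (K * ‖u‖ ^ 2) ≤ 2 * (K * ‖T β θ u - z • u‖ ^ 2) + 2 * (η * ‖u‖ ^ 2) at hle
      linarith
    refine le_of_sq_le_sq ?_ (norm_nonneg _)
    rw [mul_pow]; linarith
  · refine h13 V m a T hT α z c hc hlow φ (fun r => (hφ0 r).le) (fun r => ?_) (Real.exp (ε * m) - 1) 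
      ?_ (fun x k hk => h11 ε hε m x k hk) hεc β θ (D β) (hD1 β) u s ?_
    · exact Real.exp_le_one_iff.2 (by simp; positivity)
    · have := Real.one_le_exp (show 0 ≤ ε * m by positivity); linarith
    · refine Summable.of_nonneg_of_le (fun j => by positivity) (fun j => ?_) ((h1 u).summable.mul_left η)
      exact mul_le_mul_of_nonneg_right ((hD2 β).le_tsum (j - s) (fun r _ => hw0 r)) (by positivity)

/-- weak continuity of the spectrum: for the banded quasi-periodic
operators `T(α,θ)` with diagonal `V(θ + jα)` and constant off-diagonals `a_{±k}`
(`1 ≤ k ≤ m`), if `α⁽ⁿ⁾ → α` and `z ∈ 𝒮(T(α⁽ⁿ⁾)) = ⋃_θ σ(T(α⁽ⁿ⁾,θ))` for all `n`,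
then `z ∈ 𝒮(T(α))`. -/
theorem weak_continuity_of_spectrum {d : ℕ}
    (V : (Fin d → AddCircle (1 : ℝ)) → ℂ) (hVcont : Continuous V)
    (hVholder : ∃ C t : NNReal, 0 < t ∧ HolderWith C t V)
    (m : ℕ) (a : ℤ → ℂ)
    (T : (Fin d → AddCircle (1 : ℝ)) → (Fin d → AddCircle (1 : ℝ)) → (ℓ2 ℤ →L[ℂ] ℓ2 ℤ))
    (hT : ∀ (α θ : Fin d → AddCircle (1 : ℝ)) (u : ℓ2 ℤ) (j : ℤ),
      T α θ u j = V (θ + j • α) * u j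
        + ∑ k ∈ Finset.Icc (1 : ℤ) (m : ℤ), (a k * u (j + k) + a (-k) * u (j - k)))
    (α : Fin d → AddCircle (1 : ℝ)) (αs : ℕ → (Fin d → AddCircle (1 : ℝ)))
    (hconv : Tendsto αs atTop (nhds α)) (z : ℂ)
    (hz : ∀ n : ℕ, z ∈ ⋃ θ, spectrum ℂ (T (αs n) θ)) :
    z ∈ ⋃ θ, spectrum ℂ (T α θ) := by
  by_contra hcon
  have hcon' : ∀ θ, IsUnit (T α θ - z • (1 : ℓ2 ℤ →L[ℂ] ℓ2 ℤ)) := by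
    intro θ
    have h : z ∉ spectrum ℂ (T α θ) := fun h => hcon (Set.mem_iUnion.2 ⟨θ, h⟩)
    rw [spectrum.notMem_iff, Algebra.algebraMap_eq_smul_one] at h
    rw [← neg_sub]; exact h.neg
  have hcont : Continuous (fun θ => Ring.inverse (T α θ - z • (1 : ℓ2 ℤ →L[ℂ] ℓ2 ℤ))) := by
    have h := h8 V hVcont m a α (T α) (hT α)
    rw [continuous_iff_continuousAt]
    intro θ
    obtain ⟨x, hx⟩ := hcon' θ
    have h' := NormedRing.inverse_continuousAt x
    rw [hx] at h'
    exact ContinuousAt.comp (f := fun θ => T α θ - z • (1 : ℓ2 ℤ →L[ℂ] ℓ2 ℤ)) h' 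
      (h.sub continuous_const).continuousAt
  obtain ⟨M, hM⟩ := isCompact_univ.exists_bound_of_continuousOn hcont.continuousOn
  have hM1 : ∀ θ, ‖Ring.inverse (T α θ - z • (1 : ℓ2 ℤ →L[ℂ] ℓ2 ℤ))‖ ≤ max M 1 := fun θ =>
    (hM θ trivial).trans (le_max_left _ _)
  set N := max M 1
  have hN : 0 < N := lt_of_lt_of_le one_pos (le_max_right _ _)
  have aux : ∀ A : ℓ2 ℤ →L[ℂ] ℓ2 ℤ, IsUnit A → ‖Ring.inverse A‖ ≤ N → ∀ u, N⁻¹ * ‖u‖ ≤ ‖A u‖ := by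
    intro A hA hn u
    have h : Ring.inverse A (A u) = u := by
      have := Ring.inverse_mul_cancel A hA
      exact congrArg (fun B : ℓ2 ℤ →L[ℂ] ℓ2 ℤ => B u) this
    rw [inv_mul_le_iff₀ hN]
    calc ‖u‖ = ‖Ring.inverse A (A u)‖ := by rw [h]
      _ ≤ ‖Ring.inverse A‖ * ‖A u‖ := ContinuousLinearMap.le_opNorm _ _
      _ ≤ _ := mul_le_mul_of_nonneg_right hn (norm_nonneg _)
  have hadj : ∀ B : ℓ2 ℤ →L[ℂ] ℓ2 ℤ, ∀ u, ContinuousLinearMap.adjoint (B - z • (1 : ℓ2 ℤ →L[ℂ] ℓ2 ℤ)) u =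
      ContinuousLinearMap.adjoint B u - star z • u := by
    intro B u
    rw [← ContinuousLinearMap.star_eq_adjoint, ← ContinuousLinearMap.star_eq_adjoint, star_sub, star_smul, star_one]
    rfl
  have e1 := h14 V hVcont m a T hT α z N⁻¹ (inv_pos.2 hN) (fun θ u => aux _ (hcon' θ) (hM1 θ) u)
  have e2 := h14 (fun x => star (V x)) hVcont.star m (fun k => star (a (-k))) 
    (fun β θ => ContinuousLinearMap.adjoint (T β θ)) (fun β θ => h7 V m a β θ (T β θ) (hT β θ))
    α (star z) N⁻¹ (inv_pos.2 hN) (fun θ u => by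
      rw [← hadj]
      refine aux _ ?_ ?_ u
      · rw [← ContinuousLinearMap.star_eq_adjoint]; exact (hcon' θ).star
      · rw [← ContinuousLinearMap.star_eq_adjoint, Ring.inverse_star, norm_star]; exact hM1 θ)
  obtain ⟨n, hn1, hn2⟩ := (hconv.eventually (e1.and e2)).exists
  obtain ⟨θ, hθ⟩ := Set.mem_iUnion.1 (hz n)
  have hunit : IsUnit (T (αs n) θ - z • (1 : ℓ2 ℤ →L[ℂ] ℓ2 ℤ)) :=
    h6 _ (N⁻¹ / 4) (by positivity) (fun u => hn1 θ u) (fun u => by rw [hadj]; exact hn2 θ u)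
  refine hθ ?_
  change IsUnit _
  rw [Algebra.algebraMap_eq_smul_one, ← neg_sub]
  exact hunit.neg
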